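/- arXiv:1901.08270 — 4 statements merged into one kernel-verified Lean document; each statement's English description precedes it below -/
import Mathlib

section
/- Let h, h' be natural numbers and let f : [0,h] → ℝ and g : [0,h'] → ℝ be concave functions that are affine on each interval [i, i+1] for integers 0 ≤ i < h (respectively 0 ≤ i < h'). Then for every integer x with 0 ≤ x ≤ h + h', the tropical convolution satisfies (f ⊗ g)(x) = max { f(a) + g(b) : a, b ∈ ℕ, a ≤ h, b ≤ h', a + b = x }; that is, in the supremum defining f ⊗ g at integer points one may restrict the variables a and b to natural numbers. -/
/-- The tropical convolution of `f : [0,h] → ℝ` and `g : [0,h'] → ℝ`: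
`(f ⊗ g)(x) = sup { f a + g b : 0 ≤ a ≤ h, 0 ≤ b ≤ h', a + b = x }`. -/
noncomputable def tropConv (h h' : ℝ) (f g : ℝ → ℝ) : ℝ → ℝ := fun x =>
  sSup {y | ∃ a b : ℝ, 0 ≤ a ∧ a ≤ h ∧ 0 ≤ b ∧ b ≤ h' ∧ a + b = x ∧ y = f a + g b}

/-!
If `a + b = x` with `x` an integer, then `⌊a⌋ + ⌈b⌉ = ⌈a⌉ + ⌊b⌋ = x`: as the first variable runs
through `[⌊a⌋, ⌈a⌉]`, the second runs through `[⌊b⌋, ⌈b⌉]`. Affine functions are convex, so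
`t ↦ f t + g (x - t)` is convex on `[⌊a⌋, ⌈a⌉]`, hence largest at an endpoint, where both variables
are integers.
-/

open Set

section Convex

variable {𝕜 E β : Type*} [Field 𝕜] [LinearOrder 𝕜] [AddCommGroup E] [Module 𝕜 E]
  [AddCommGroup β] [PartialOrder β] [IsOrderedAddMonoid β] [Module 𝕜 β]

theorem convexOn_add_comp_const_sub {s t : Set E} {f g : E → β}
    (hf : ConvexOn 𝕜 s f) (hg : ConvexOn 𝕜 t g) (c : E) :
    ConvexOn 𝕜 (s ∩ (c - ·) ⁻¹' t) (fun a ↦ f a + g (c - a)) := by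
  have hg_reflected : ConvexOn 𝕜 ((c - ·) ⁻¹' t) (fun a ↦ g (c - a)) :=
    hg.comp_affineMap (AffineMap.const 𝕜 E c - AffineMap.id 𝕜 E)
  have hst := hf.1.inter hg_reflected.1
  exact (hf.subset inter_subset_left hst).add (hg_reflected.subset inter_subset_right hst)

theorem convexOn_of_exists_eq_mul_add [IsStrictOrderedRing 𝕜] {s : Set 𝕜} (hs : Convex 𝕜 s)
    {f : 𝕜 → 𝕜} (hf : ∃ m c : 𝕜, ∀ x ∈ s, f x = m * x + c) : ConvexOn 𝕜 s f := by
  obtain ⟨m, c, hmc⟩ := hf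
  exact (((LinearMap.mulLeft 𝕜 m).convexOn hs).add_const c).congr fun x hx ↦ (hmc x hx).symm

end Convex

section Floor

variable {𝕜 : Type*} [Field 𝕜] [LinearOrder 𝕜] [IsStrictOrderedRing 𝕜] [FloorSemiring 𝕜]

theorem floor_add_ceil_eq_of_add_eq_natCast {a b : 𝕜} {n : ℕ} (ha : 0 ≤ a) (hb : 0 ≤ b)
    (hab : a + b = n) : ⌊a⌋₊ + ⌈b⌉₊ = n := by
  have floor_le := Nat.floor_le ha
  have lt_floor := Nat.lt_floor_add_one a
  have le_ceil := Nat.le_ceil b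
  have ceil_lt := Nat.ceil_lt_add_one hb
  have lower : (n : 𝕜) < (⌊a⌋₊ + ⌈b⌉₊ : ℕ) + 1 := by push_cast; linarith
  have upper : ((⌊a⌋₊ + ⌈b⌉₊ : ℕ) : 𝕜) < n + 1 := by push_cast; linarith
  norm_cast at lower upper
  lia

theorem convexOn_Icc_floor_ceil {β : Type*} [AddCommGroup β] [PartialOrder β] [Module 𝕜 β]
    {h : ℕ} {f : 𝕜 → β}
    (hf : ∀ i : ℕ, i < h → ConvexOn 𝕜 (Icc (i : 𝕜) (i + 1)) f) {a : 𝕜} (ha : a ≤ h) :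
    ConvexOn 𝕜 (Icc (⌊a⌋₊ : 𝕜) ⌈a⌉₊) f := by
  rcases (Nat.floor_le_ceil a).eq_or_lt with floor_eq | floor_lt
  · rw [floor_eq, Icc_self]
    exact (convexOn_const (f ⌈a⌉₊) (convex_singleton _)).congr fun x hx ↦ by
      rw [eq_of_mem_singleton hx]
  · have ceil_le : ⌈a⌉₊ ≤ h := Nat.ceil_le.2 ha
    have ceil_eq : ⌈a⌉₊ = ⌊a⌋₊ + 1 := (Nat.ceil_le_floor_add_one a).antisymm floor_lt
    simpa only [ceil_eq, Nat.cast_add_one] using hf ⌊a⌋₊ (by lia)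

theorem exists_natCast_add_ge_of_convexOn_Icc {β : Type*} [AddCommGroup β] [LinearOrder β]
    [IsOrderedAddMonoid β] [Module 𝕜 β] [IsStrictOrderedModule 𝕜 β] {h h' n : ℕ} {f g : 𝕜 → β}
    (hf : ∀ i : ℕ, i < h → ConvexOn 𝕜 (Icc (i : 𝕜) (i + 1)) f)
    (hg : ∀ i : ℕ, i < h' → ConvexOn 𝕜 (Icc (i : 𝕜) (i + 1)) g)
    {a b : 𝕜} (ha : a ∈ Icc 0 (h : 𝕜)) (hb : b ∈ Icc 0 (h' : 𝕜)) (hab : a + b = n) :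
    ∃ i j : ℕ, i ≤ h ∧ j ≤ h' ∧ i + j = n ∧ f a + g b ≤ f i + g j := by
  have floor_ceil : ⌊a⌋₊ + ⌈b⌉₊ = n := floor_add_ceil_eq_of_add_eq_natCast ha.1 hb.1 hab
  have ceil_floor : ⌈a⌉₊ + ⌊b⌋₊ = n := by
    rw [add_comm, floor_add_ceil_eq_of_add_eq_natCast hb.1 ha.1 (by rwa [add_comm])]
  have sub_self_eq : (n : 𝕜) - a = b := by rw [← hab, add_sub_cancel_left]
  have sub_floor_eq : (n : 𝕜) - ⌊a⌋₊ = ⌈b⌉₊ := by simp [← floor_ceil]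
  have sub_ceil_eq : (n : 𝕜) - ⌈a⌉₊ = ⌊b⌋₊ := by simp [← ceil_floor]
  have hfg := convexOn_add_comp_const_sub (convexOn_Icc_floor_ceil hf ha.2)
    (convexOn_Icc_floor_ceil hg hb.2) (n : 𝕜)
  have floor_le_ceil_a : (⌊a⌋₊ : 𝕜) ≤ ⌈a⌉₊ := mod_cast Nat.floor_le_ceil a
  have floor_le_ceil_b : (⌊b⌋₊ : 𝕜) ≤ ⌈b⌉₊ := mod_cast Nat.floor_le_ceil b
  have le_max_endpoints : f a + g b ≤ max (f ⌊a⌋₊ + g ⌈b⌉₊) (f ⌈a⌉₊ + g ⌊b⌋₊) := by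
    simpa only [sub_self_eq, sub_floor_eq, sub_ceil_eq] using hfg.le_max_of_mem_Icc
      ⟨left_mem_Icc.2 floor_le_ceil_a, by simpa only [mem_preimage, sub_floor_eq, right_mem_Icc]⟩
      ⟨right_mem_Icc.2 floor_le_ceil_a, by simpa only [mem_preimage, sub_ceil_eq, left_mem_Icc]⟩
      ⟨Nat.floor_le ha.1, Nat.le_ceil a⟩
  rcases le_max_iff.1 le_max_endpoints with le_floor_ceil | le_ceil_floor
  · exact ⟨⌊a⌋₊, ⌈b⌉₊, Nat.floor_le_of_le ha.2, Nat.ceil_le.2 hb.2, floor_ceil, le_floor_ceil⟩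
  · exact ⟨⌈a⌉₊, ⌊b⌋₊, Nat.ceil_le.2 ha.2, Nat.floor_le_of_le hb.2, ceil_floor, le_ceil_floor⟩

end Floor

theorem tropConv_eq_sup_nat_general {h h' : ℕ} {f g : ℝ → ℝ}
    (hf : ∀ i : ℕ, i < h → ConvexOn ℝ (Icc (i : ℝ) (i + 1)) f)
    (hg : ∀ i : ℕ, i < h' → ConvexOn ℝ (Icc (i : ℝ) (i + 1)) g) {x : ℕ} (hx : x ≤ h + h') :
    IsGreatest {y | ∃ a b : ℕ, a ≤ h ∧ b ≤ h' ∧ a + b = x ∧ y = f (a : ℝ) + g (b : ℝ)}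
      (tropConv h h' f g x) := by
  set S := {y | ∃ a b : ℕ, a ≤ h ∧ b ≤ h' ∧ a + b = x ∧ y = f (a : ℝ) + g (b : ℝ)}
  have nonempty : S.Nonempty := ⟨_, min x h, x - min x h, by lia, by lia, by lia, rfl⟩
  have finite : S.Finite := by
    refine ((finite_Iic h).image2 (fun a b : ℕ ↦ f a + g b) (finite_Iic h')).subset ?_
    rintro _ ⟨a, b, ha, hb, -, rfl⟩
    exact mem_image2_of_mem ha hb
  have tropConv_eq : tropConv h h' f g x = sSup S := by
    refine csSup_eq_csSup_of_forall_exists_le ?_ ?_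
    · rintro _ ⟨a, b, ha0, hah, hb0, hbh, hab, rfl⟩
      obtain ⟨i, j, hi, hj, hij, hle⟩ :=
        exists_natCast_add_ge_of_convexOn_Icc hf hg ⟨ha0, hah⟩ ⟨hb0, hbh⟩ hab
      exact ⟨_, ⟨i, j, hi, hj, hij, rfl⟩, hle⟩
    · rintro _ ⟨a, b, ha, hb, hab, rfl⟩
      exact ⟨_, ⟨a, b, a.cast_nonneg, mod_cast ha, b.cast_nonneg, mod_cast hb, mod_cast hab, rfl⟩,
        le_rfl⟩
  rw [tropConv_eq]
  exact ⟨nonempty.csSup_mem finite, fun _ hy ↦ le_csSup finite.bddAbove hy⟩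

/-- If `f` and `g` are concave polygons on `[0,h]` and `[0,h']` with integer break
abscissas (i.e. affine on each interval `[i, i+1]`), then at integer points the
supremum defining the tropical convolution may be restricted to natural number
variables. -/
theorem tropConv_eq_sup_nat (h h' : ℕ) (f g : ℝ → ℝ)
    (hf : ConcaveOn ℝ (Set.Icc 0 (h : ℝ)) f)
    (hg : ConcaveOn ℝ (Set.Icc 0 (h' : ℝ)) g)
    (hfa : ∀ i : ℕ, i < h →
      ∃ m c : ℝ, ∀ x ∈ Set.Icc (i : ℝ) ((i : ℝ) + 1), f x = m * x + c)
    (hga : ∀ i : ℕ, i < h' →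
      ∃ m c : ℝ, ∀ x ∈ Set.Icc (i : ℝ) ((i : ℝ) + 1), g x = m * x + c) :
    ∀ x : ℕ, x ≤ h + h' →
      tropConv (h : ℝ) (h' : ℝ) f g (x : ℝ) =
        sSup {y | ∃ a b : ℕ, a ≤ h ∧ b ≤ h' ∧ a + b = x ∧ y = f (a : ℝ) + g (b : ℝ)} := by
  exact fun x hx ↦ (tropConv_eq_sup_nat_general
    (fun i hi ↦ convexOn_of_exists_eq_mul_add (convex_Icc _ _) (hfa i hi))
    (fun i hi ↦ convexOn_of_exists_eq_mul_add (convex_Icc _ _) (hga i hi)) hx).csSup_eq.symm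
end

section
/- Let p be a prime, V a finite-dimensional ℚ_p-vector space, and M a ℤ_p-submodule of V (where V is regarded as a ℤ_p-module by restriction of scalars). Then there exist natural numbers n and m and a ℤ_p-linear isomorphism M ≅ ℤ_p^n × ℚ_p^m, where ℚ_p^m is regarded as a ℤ_p-module by restriction of scalars. In other words, every ℤ_p-submodule of a finite-dimensional ℚ_p-vector space is isomorphic to the direct sum of a free ℤ_p-module of finite rank and a finite-dimensional ℚ_p-vector space. -/
/-!
Let `R` be a complete discrete valuation ring with maximal ideal `𝔪`, residue field `k` and fraction
field `K`. The submodule `⋂ 𝔪 ^ n M` of `M ⊆ V` is contained in the largest `K`-subspace `D` of `V`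
lying inside `M`. Intersecting `M` with a `K`-linear complement of `D` gives `M ≅ D × N` with `N`
torsion-free of finite rank and `𝔪`-adically Hausdorff. A family in `N` that is linearly independent
modulo `𝔪` is linearly independent over `R`, so `N / 𝔪 N` is finite-dimensional over `k`. By
completeness of `R`, lifts to `N` of a basis of `N / 𝔪 N` generate `N`, which is therefore finite
and torsion-free, hence free.
-/

open IsLocalRing TensorProduct
open scoped Pointwise

section AdicTopology

variable {R : Type*} [CommRing R] {I : Ideal R}

theorem isPrecomplete_pi {ι : Type*} [Finite ι] {M : ι → Type*} [∀ i, AddCommGroup (M i)]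
    [∀ i, Module R (M i)] [∀ i, IsPrecomplete I (M i)] : IsPrecomplete I (∀ i, M i) := by
  classical
  have := Fintype.ofFinite ι
  refine AdicCompletion.of_surjective_iff.mp fun y ↦ ?_
  choose x hx using fun i ↦ AdicCompletion.of_surjective I (M i) (AdicCompletion.pi I M y i)
  refine ⟨x, (AdicCompletion.piEquivOfFintype I M).injective ?_⟩
  simp only [AdicCompletion.piEquivOfFintype_apply]
  exact funext hx

variable {M : Type*} [AddCommGroup M] [Module R M]

theorem finite_of_finite_quotient_smul_top [IsPrecomplete I R] [IsHausdorff I M]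
    [Module.Finite R (M ⧸ (I • ⊤ : Submodule R M))] : Module.Finite R M := by
  obtain ⟨n, g, hg⟩ := Module.Finite.exists_fin' R (M ⧸ (I • ⊤ : Submodule R M))
  obtain ⟨f, hf⟩ := Module.projective_lifting_property _ g (Submodule.mkQ_surjective (I • ⊤))
  have : IsPrecomplete I (Fin n → R) := isPrecomplete_pi
  exact .of_surjective f (surjective_of_mkQ_comp_surjective (I := I) (hf ▸ hg))

theorem isHausdorff_of_disjoint_iInf_pow_smul_top {N : Submodule R M}
    (hN : Disjoint (⨅ n : ℕ, I ^ n • ⊤ : Submodule R M) N) : IsHausdorff I N := by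
  refine ⟨fun x hx ↦ Subtype.ext (Submodule.disjoint_def.mp hN x ?_ x.2)⟩
  refine (Submodule.mem_iInf _).mpr fun n ↦ ?_
  have hle : (I ^ n • ⊤ : Submodule R N).map N.subtype ≤ I ^ n • ⊤ := by
    rw [Submodule.map_smul'']
    exact smul_mono_right _ le_top
  exact hle (Submodule.mem_map_of_mem (SModEq.zero.mp (hx n)))

end AdicTopology

section FlatOverLocalRing

universe u v

variable {R : Type u} [CommRing R] [IsLocalRing R] {M : Type v} [AddCommGroup M] [Module R M]
  [Module.Flat R M]

theorem rank_residueField_tensorProduct_le :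
    Module.rank (ResidueField R) (ResidueField R ⊗[R] M) ≤ Cardinal.lift.{u} (Module.rank R M) := by
  let b := Module.Free.chooseBasis (ResidueField R) (ResidueField R ⊗[R] M)
  obtain ⟨w, hw : TensorProduct.mk R (ResidueField R) M 1 ∘ w = b⟩ :=
    (TensorProduct.mk_surjective R M (ResidueField R) residue_surjective).comp_left b
  have hw_indep : LinearIndependent R w :=
    Module.IsLocalRing.linearIndependent_of_flat w (hw.symm ▸ b.linearIndependent)
  rw [← b.mk_eq_rank'', ← Cardinal.lift_le.{v}, Cardinal.lift_lift]
  exact hw_indep.cardinal_lift_le_rank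

theorem finite_quotient_maximalIdeal_smul_top (hM : Module.rank R M < Cardinal.aleph0) :
    Module.Finite R (M ⧸ (maximalIdeal R • ⊤ : Submodule R M)) := by
  have : Module.Finite (ResidueField R) (ResidueField R ⊗[R] M) :=
    Module.rank_lt_aleph0_iff.mp
      (rank_residueField_tensorProduct_le.trans_lt (Cardinal.lift_lt_aleph0.mpr hM))
  have : Module.Finite R (ResidueField R ⊗[R] M) := .trans (ResidueField R) _
  let e : ResidueField R ⊗[R] M ≃ₗ[R] M ⧸ (maximalIdeal R • ⊤ : Submodule R M) :=
    quotTensorEquivQuotSMul M (maximalIdeal R)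
  exact .equiv e

theorem finite_of_flat_of_isHausdorff [IsPrecomplete (maximalIdeal R) R]
    [IsHausdorff (maximalIdeal R) M] (hM : Module.rank R M < Cardinal.aleph0) :
    Module.Finite R M :=
  have := finite_quotient_maximalIdeal_smul_top hM
  finite_of_finite_quotient_smul_top (I := maximalIdeal R)

end FlatOverLocalRing

theorem exists_maximalIdeal_pow_le_span_singleton {R : Type*} [CommRing R] [IsNoetherianRing R]
    [IsLocalRing R] [Ring.KrullDimLE 1 R] {b : R} (hb : b ∈ nonZeroDivisors R) :
    ∃ n : ℕ, maximalIdeal R ^ n ≤ Ideal.span {b} := by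
  have : IsArtinian R (R ⧸ Ideal.span {b}) := (isFiniteLength_iff_isNoetherian_isArtinian.mp
    (isFiniteLength_quotient_span_singleton R hb)).2
  have : IsArtinianRing (R ⧸ Ideal.span {b}) := isArtinian_of_tower R this
  exact exists_maximalIdeal_pow_le_of_isArtinianRing_quotient (Ideal.span {b})

section LargestSubspace

/-- The largest `K`-subspace of `V` contained in the `R`-submodule `M`, encoded as the set of
vectors all of whose `K`-multiples lie in `M`. When `K` is the fraction field of a domain `R`, it is
the divisible part of `M`. -/
def largestSubspace {R : Type*} (K : Type*) {V : Type*} [Semiring R] [Semiring K] [AddCommMonoid V]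
    [Module R V] [Module K V] (M : Submodule R V) : Submodule K V where
  carrier := {v | ∀ c : K, c • v ∈ M}
  add_mem' hv hw c := by simpa only [smul_add] using M.add_mem (hv c) (hw c)
  zero_mem' c := by simpa only [smul_zero] using M.zero_mem
  smul_mem' a v hv c := by simpa only [smul_smul] using hv (c * a)

theorem restrictScalars_largestSubspace_le {R K V : Type*} [Semiring R] [Semiring K]
    [AddCommMonoid V] [SMul R K] [Module R V] [Module K V] [IsScalarTower R K V]
    (M : Submodule R V) : (largestSubspace K M).restrictScalars R ≤ M :=
  fun v hv ↦ one_smul K v ▸ hv 1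

theorem iInf_pow_smul_top_le_largestSubspace {R V : Type*} (K : Type*) [CommRing R]
    [IsNoetherianRing R] [IsLocalRing R] [Ring.KrullDimLE 1 R] [CommRing K] [Algebra R K]
    [IsFractionRing R K] [AddCommGroup V] [Module R V] [Module K V] [IsScalarTower R K V]
    (M : Submodule R V) :
    (⨅ n : ℕ, maximalIdeal R ^ n • ⊤ : Submodule R M) ≤
      ((largestSubspace K M).restrictScalars R).comap M.subtype := by
  intro x hx c
  obtain ⟨a, b, rfl⟩ := IsLocalization.exists_mk'_eq (nonZeroDivisors R) c
  obtain ⟨n, hn⟩ := exists_maximalIdeal_pow_le_span_singleton b.2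
  obtain ⟨y, -, rfl⟩ : x ∈ (b : R) • (⊤ : Submodule R M) := by
    rw [← Submodule.ideal_span_singleton_smul]
    exact Submodule.smul_mono_left hn ((Submodule.mem_iInf _).mp hx n)
  have hcancel : IsLocalization.mk' K a b • (b : R) • (y : V) = a • (y : V) := by
    rw [← algebraMap_smul K (b : R), smul_smul, IsLocalization.mk'_spec, algebraMap_smul]
  exact hcancel.symm ▸ M.smul_mem a y.2

end LargestSubspace

theorem padicInt_submodule_iso_general {R K V : Type*} [CommRing R] [IsDomain R]
    [IsDiscreteValuationRing R] [IsPrecomplete (maximalIdeal R) R] [Field K] [Algebra R K]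
    [IsFractionRing R K] [AddCommGroup V] [Module K V] [FiniteDimensional K V] [Module R V]
    [IsScalarTower R K V] (M : Submodule R V) :
    ∃ n m : ℕ, Nonempty (M ≃ₗ[R] ((Fin n → R) × (Fin m → K))) := by
  let D := largestSubspace K M
  have hDM : D.restrictScalars R ≤ M := restrictScalars_largestSubspace_le M
  obtain ⟨W, hDW⟩ := D.exists_isCompl
  let N : Submodule R M := (W.restrictScalars R).comap M.subtype
  have hDN : IsCompl ((D.restrictScalars R).comap M.subtype) N :=
    Submodule.isCompl_comap_subtype_of_isCompl_of_le
      (hDW.map (Submodule.restrictScalarsLatticeHom R K V)) hDM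
  have : IsHausdorff (maximalIdeal R) N := isHausdorff_of_disjoint_iInf_pow_smul_top
    (hDN.disjoint.mono_left (iInf_pow_smul_top_le_largestSubspace K M))
  have : Module.IsTorsionFree R V := .trans_faithfulSMul R K V
  have hN_rank : Module.rank R N < Cardinal.aleph0 := calc
    Module.rank R N ≤ Module.rank R V := N.rank_le.trans M.rank_le
    _ = Module.rank K V := (IsLocalization.rank_eq K (nonZeroDivisors R) le_rfl).symm
    _ < Cardinal.aleph0 := Module.rank_lt_aleph0 K V
  have : Module.Finite R N := finite_of_flat_of_isHausdorff hN_rank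
  let eN := (Module.finBasis R N).equivFun
  let eD := (Submodule.comapSubtypeEquivOfLe hDM).trans
    ((Module.finBasis K D).equivFun.restrictScalars R)
  exact ⟨_, _, ⟨(Submodule.prodEquivOfIsCompl _ _ hDN.symm).symm.trans (eN.prodCongr eD)⟩⟩

/-- Every `ℤ_p`-submodule of a finite-dimensional `ℚ_p`-vector space is isomorphic,
as a `ℤ_p`-module, to the direct sum of a finite free `ℤ_p`-module and a
finite-dimensional `ℚ_p`-vector space. -/
theorem padicInt_submodule_iso (p : ℕ) [Fact p.Prime]
    (V : Type*) [AddCommGroup V] [Module ℚ_[p] V] [FiniteDimensional ℚ_[p] V]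
    [Module ℤ_[p] V] [IsScalarTower ℤ_[p] ℚ_[p] V]
    (M : Submodule ℤ_[p] V) :
    ∃ n m : ℕ,
      Nonempty (M ≃ₗ[ℤ_[p]] ((Fin n → ℤ_[p]) × (Fin m → ℚ_[p]))) :=
  padicInt_submodule_iso_general M
end

section
/- Let p be a prime. Every short exact sequence of ℤ_p-modules 0 → ℤ_p → M → ℚ_p → 0 splits. Equivalently: if M is a ℤ_p-module and f : M → ℚ_p is a surjective ℤ_p-linear map whose kernel is isomorphic to ℤ_p as a ℤ_p-module, then there exists a ℤ_p-linear map s : ℚ_p → M with f ∘ s = id. In other words, Ext¹_{ℤ_p}(ℚ_p, ℤ_p) = 0. -/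
/-!
A linear map out of `R[1/x]` amounts to a sequence `c` with `x • c (n + 1) = c n`, the images of
the powers `x⁻ⁿ`. So a section of `f : M → R[1/x]` exists as soon as the sequence `x⁻ⁿ` lifts
along `f` to such a sequence in `M`. Arbitrary lifts `m n` of `x⁻ⁿ` miss the relation by
`a n = x • m (n + 1) - m n ∈ ker f`, and correcting `m` by a sequence `b` in `ker f` requires
`b n = a n + x • b (n + 1)`. When `ker f` is adically complete this is solved by
`b n = ∑ k, x ^ k • a (n + k)`.
-/

open IsLocalRing

section DivisionSequences

variable {R : Type*} [CommSemiring R] (x : R)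

/-- The sequences in `M` whose terms are obtained by successively dividing the initial term by `x`,
that is, the inverse limit of `⋯ → M → M → M` along multiplication by `x`. They parametrize the
linear maps from `R[1/x]` to `M`. -/
def divisionSequences (M : Type*) [AddCommMonoid M] [Module R M] : Submodule R (ℕ → M) where
  carrier := {c | ∀ n, x • c (n + 1) = c n}
  add_mem' hc hd n := by simp only [Pi.add_apply, smul_add, hc n, hd n]
  zero_mem' _ := smul_zero x
  smul_mem' r c hc n := by simp only [Pi.smul_apply, smul_comm x r, hc n]

variable {x} {M : Type*} [AddCommMonoid M] [Module R M]

theorem mem_divisionSequences {c : ℕ → M} :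
    c ∈ divisionSequences x M ↔ ∀ n, x • c (n + 1) = c n :=
  Iff.rfl

variable (x M) in
theorem isUnit_algebraMap_end_divisionSequences :
    IsUnit (algebraMap R (Module.End R (divisionSequences x M)) x) := by
  refine (Module.End.isUnit_iff _).2 ⟨fun c d hcd ↦ ?_, fun c ↦ ?_⟩
  · ext n
    have hsmul : x • c.1 (n + 1) = x • d.1 (n + 1) := congrFun (congrArg Subtype.val hcd) (n + 1)
    rwa [c.2 n, d.2 n] at hsmul
  · exact ⟨⟨fun n ↦ c.1 (n + 1), fun n ↦ c.2 (n + 1)⟩, Subtype.ext (funext c.2)⟩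

section Localization

variable (S : Type*) [CommSemiring S] [Algebra R S] [IsLocalization.Away x S]

variable (x) in
theorem invSelf_pow_mem_divisionSequences :
    (fun n ↦ IsLocalization.Away.invSelf x ^ n : ℕ → S) ∈ divisionSequences x S := by
  refine mem_divisionSequences.2 fun n ↦ ?_
  rw [Algebra.smul_def, pow_succ', ← mul_assoc, IsLocalization.Away.mul_invSelf, one_mul]

theorem exists_linearMap_one_eq_of_mem_divisionSequences {c : ℕ → M}
    (hc : c ∈ divisionSequences x M) : ∃ s : S →ₗ[R] M, s 1 = c 0 := by
  have hunit (y : Submonoid.powers x) :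
      IsUnit (algebraMap R (Module.End R (divisionSequences x M)) y) := by
    obtain ⟨_, n, rfl⟩ := y
    simpa only [map_pow] using (isUnit_algebraMap_end_divisionSequences x M).pow n
  -- `x` need not act invertibly on `M`, so the universal property is applied to the sequences.
  let toSequences : S →ₗ[R] divisionSequences x M :=
    IsLocalizedModule.lift (Submonoid.powers x) (Algebra.linearMap R S)
      (LinearMap.toSpanSingleton R _ ⟨c, hc⟩) hunit
  have toSequences_one : toSequences 1 = ⟨c, hc⟩ := by
    rw [← map_one (algebraMap R S), ← Algebra.linearMap_apply, IsLocalizedModule.lift_apply,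
      LinearMap.toSpanSingleton_apply, one_smul]
  refine ⟨LinearMap.proj 0 ∘ₗ (divisionSequences x M).subtype ∘ₗ toSequences, ?_⟩
  simp only [LinearMap.comp_apply, toSequences_one, Submodule.subtype_apply, LinearMap.proj_apply]

end Localization

end DivisionSequences

theorem linearMap_ext_one {R S N : Type*} [CommSemiring R] [CommSemiring S] [Algebra R S]
    [AddCommMonoid N] [Module R N] [Module S N] [IsScalarTower R S N] (W : Submonoid R)
    [IsLocalization W S] {g h : S →ₗ[R] N} (map_one_eq : g 1 = h 1) : g = h := by
  have extendScalars_eq :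
      g.extendScalarsOfIsLocalization W S = h.extendScalarsOfIsLocalization W S :=
    LinearMap.ext_ring map_one_eq
  exact LinearMap.ext fun y ↦ LinearMap.congr_fun extendScalars_eq y

section AdicComplete

variable {R : Type*} [CommRing R] {I : Ideal R} {x : R}
variable {M N : Type*} [AddCommGroup M] [Module R M] [AddCommGroup N] [Module R N]

theorem exists_forall_sum_pow_smul_smodEq [IsPrecomplete I M] (hx : x ∈ I) (a : ℕ → M) :
    ∃ L, ∀ n, ∑ k ∈ Finset.range n, x ^ k • a k ≡ L [SMOD (I ^ n • ⊤ : Submodule R M)] := by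
  suffices cauchy : AdicCompletion.IsAdicCauchy I M fun n ↦ ∑ k ∈ Finset.range n, x ^ k • a k from
    IsPrecomplete.prec ‹_› cauchy
  rw [AdicCompletion.isAdicCauchy_iff]
  intro n
  have last_term_mem : x ^ n • a n ∈ (I ^ n • ⊤ : Submodule R M) :=
    Submodule.smul_mem_smul (Ideal.pow_mem_pow hx n) Submodule.mem_top
  rwa [SModEq.comm, SModEq.sub_mem, Finset.sum_range_succ, add_sub_cancel_left]

theorem exists_eq_add_smul_succ [IsAdicComplete I M] (hx : x ∈ I) (a : ℕ → M) :
    ∃ b : ℕ → M, ∀ n, b n = a n + x • b (n + 1) := by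
  choose b hb using fun n ↦ exists_forall_sum_pow_smul_smodEq hx fun k ↦ a (n + k)
  refine ⟨b, fun n ↦ (IsHausdorff.eq_iff_smodEq (I := I)).2 fun m ↦ ?_⟩
  have sum_succ : ∑ k ∈ Finset.range (m + 1), x ^ k • a (n + k) =
      a n + x • ∑ k ∈ Finset.range m, x ^ k • a (n + 1 + k) := by
    simp only [Finset.sum_range_succ', Finset.smul_sum, smul_smul, ← pow_succ', pow_zero, one_smul,
      add_zero, add_assoc, add_comm 1, add_comm (a n)]
  have hbn : a n + x • ∑ k ∈ Finset.range m, x ^ k • a (n + 1 + k) ≡ b n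
      [SMOD (I ^ m • ⊤ : Submodule R M)] :=
    sum_succ ▸ (hb n (m + 1)).mono (Submodule.smul_mono_left (Ideal.pow_le_pow_right m.le_succ))
  exact hbn.symm.trans (SModEq.rfl.add ((hb (n + 1) m).smul x))

theorem exists_mem_divisionSequences_forall_map_eq {f : M →ₗ[R] N} (hf : Function.Surjective f)
    [IsAdicComplete I (LinearMap.ker f)] (hx : x ∈ I) {d : ℕ → N}
    (hd : d ∈ divisionSequences x N) : ∃ c ∈ divisionSequences x M, ∀ n, f (c n) = d n := by
  choose m hm using fun n ↦ hf (d n)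
  have defect_mem (n : ℕ) : x • m (n + 1) - m n ∈ LinearMap.ker f := by
    rw [LinearMap.mem_ker, map_sub, map_smul, hm, hm, hd n, sub_self]
  obtain ⟨b, hb⟩ := exists_eq_add_smul_succ hx fun n ↦ (⟨_, defect_mem n⟩ : LinearMap.ker f)
  refine ⟨fun n ↦ m n + b n, fun n ↦ ?_, fun n ↦ ?_⟩
  · have correction : (b n : M) = x • m (n + 1) - m n + x • (b (n + 1) : M) :=
      congrArg Subtype.val (hb n)
    calc
      x • (m (n + 1) + b (n + 1) : M)
        = m n + (x • m (n + 1) - m n + x • (b (n + 1) : M)) := by rw [smul_add]; abel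
      _ = m n + b n := by rw [correction]
  · rw [map_add, hm, LinearMap.mem_ker.1 (b n).2, add_zero]

theorem isAdicComplete_of_linearEquiv [IsAdicComplete I N] (e : M ≃ₗ[R] N) :
    IsAdicComplete I M := by
  have of_eq : ⇑(AdicCompletion.of I M) =
      (AdicCompletion.congr I e).symm ∘ AdicCompletion.of I N ∘ e := by
    ext m : 1
    simp only [Function.comp_apply, AdicCompletion.congr_symm_apply, AdicCompletion.map_of,
      LinearEquiv.coe_coe, LinearEquiv.symm_apply_apply]
  rw [← AdicCompletion.of_bijective_iff, of_eq]
  exact (AdicCompletion.congr I e).symm.bijective.comp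
    ((AdicCompletion.of_bijective I N).comp e.bijective)

end AdicComplete

theorem isLocalization_away_of_irreducible {R K : Type*} [CommRing R] [IsDomain R]
    [IsDiscreteValuationRing R] [Field K] [Algebra R K] [IsFractionRing R K] {ϖ : R}
    (hϖ : Irreducible ϖ) : IsLocalization.Away ϖ K := by
  have algebraMap_ne_zero {r : R} (hr : r ≠ 0) : algebraMap R K r ≠ 0 :=
    (map_ne_zero_iff _ (IsFractionRing.injective R K)).2 hr
  refine .mk ϖ (algebraMap_ne_zero hϖ.ne_zero).isUnit (fun z ↦ ?_) fun a b hab ↦ ?_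
  · obtain ⟨a, b, hb, rfl⟩ := IsFractionRing.div_surjective (A := R) z
    have hb0 : b ≠ 0 := nonZeroDivisors.ne_zero hb
    obtain ⟨n, u, hu⟩ := IsDiscreteValuationRing.associated_pow_irreducible hb0 hϖ
    refine ⟨n, a * u, ?_⟩
    rw [← map_pow, ← hu, map_mul, map_mul, ← mul_assoc,
      div_mul_cancel₀ _ (algebraMap_ne_zero hb0)]
  · exact ⟨0, by rw [IsFractionRing.injective R K hab]⟩

theorem padic_ext_vanishes_general {R S M : Type*} [CommRing R] [CommRing S] [Algebra R S]
    [AddCommGroup M] [Module R M] {I : Ideal R} {x : R} (hx : x ∈ I) [IsLocalization.Away x S]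
    (f : M →ₗ[R] S) (hf : Function.Surjective f) [IsAdicComplete I (LinearMap.ker f)] :
    ∃ s : S →ₗ[R] M, f ∘ₗ s = LinearMap.id := by
  obtain ⟨c, hc, hfc⟩ :=
    exists_mem_divisionSequences_forall_map_eq hf hx (invSelf_pow_mem_divisionSequences x S)
  obtain ⟨s, hs⟩ := exists_linearMap_one_eq_of_mem_divisionSequences S hc
  refine ⟨s, linearMap_ext_one (Submonoid.powers x) ?_⟩
  rw [LinearMap.comp_apply, hs, hfc, pow_zero, LinearMap.id_apply]

/-- Every short exact sequence of `ℤ_p`-modules `0 → ℤ_p → M → ℚ_p → 0` splits: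
if `f : M → ℚ_p` is a surjective `ℤ_p`-linear map whose kernel is isomorphic to
`ℤ_p`, then `f` has a `ℤ_p`-linear section. In other words,
`Ext¹_{ℤ_p}(ℚ_p, ℤ_p) = 0`. -/
theorem padic_ext_vanishes (p : ℕ) [Fact p.Prime]
    (M : Type*) [AddCommGroup M] [Module ℤ_[p] M]
    (f : M →ₗ[ℤ_[p]] ℚ_[p]) (hf : Function.Surjective f)
    (hker : Nonempty ((LinearMap.ker f) ≃ₗ[ℤ_[p]] ℤ_[p])) :
    ∃ s : ℚ_[p] →ₗ[ℤ_[p]] M, f ∘ₗ s = LinearMap.id := by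
  obtain ⟨e⟩ := hker
  have : IsAdicComplete (maximalIdeal ℤ_[p]) (LinearMap.ker f) := isAdicComplete_of_linearEquiv e
  have : IsLocalization.Away (p : ℤ_[p]) ℚ_[p] :=
    isLocalization_away_of_irreducible PadicInt.irreducible_p
  exact padic_ext_vanishes_general ((mem_maximalIdeal _).2 PadicInt.irreducible_p.not_isUnit) f hf
end

section
/- Let p be a prime and let ℤ_(p) denote the localization of ℤ at the prime ideal (p) (the ring of rational numbers with denominator prime to p). There exists a ℤ_(p)-module M and a short exact sequence of ℤ_(p)-modules 0 → ℤ_(p) → M → ℚ → 0 that does not split (i.e., the surjection M → ℚ admits no ℤ_(p)-linear section). Moreover, such an M is not a finitely generated ℤ_(p)-module, and its maximal divisible submodule is zero (the only divisible ℤ_(p)-submodule of M is 0). In particular, the analogue of the statement 'every submodule of a finite-dimensional vector space over the fraction field is a direct sum of a finite free module and a vector space' fails over the non-complete discrete valuation ring ℤ_(p). -/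
instance span_int_p_isPrime (p : ℕ) [hp : Fact p.Prime] :
    (Ideal.span ({(p : ℤ)} : Set ℤ)).IsPrime :=
  (Ideal.span_singleton_prime (by exact_mod_cast hp.out.ne_zero)).mpr
    (Nat.prime_iff_prime_int.mp hp.out)

/-- `ℤ_(p)`, the localization of `ℤ` at the prime ideal `(p)`. -/
abbrev ZpLoc (p : ℕ) [Fact p.Prime] : Type :=
  Localization.AtPrime (Ideal.span ({(p : ℤ)} : Set ℤ))

/-!
A Noetherian local domain `R` of dimension at most one which is not complete has a completion `R̂`
that is torsion-free, and `R̂ / R` is a nonzero module on which every nonzero scalar acts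
bijectively, i.e. a nonzero vector space over the fraction field `K`. The preimage `M` in `R̂` of a
line `K ⊆ R̂ / R` is an extension of `K` by `R`. As a submodule of the separated module `R̂` it
contains no nonzero divisible submodule, hence no copy of `K`, so the extension does not split.

The ring `ℤ_(p)` is not complete because it is not Henselian: `X² - X + p` has the simple root `0`
modulo `p`, but its discriminant `1 - 4p` is negative, so it has no rational root.
-/

open Function IsLocalRing

universe u

section Divisible

variable {R M N : Type*} [CommRing R] [AddCommGroup M] [Module R M] [AddCommGroup N] [Module R N]

/-- A submodule `D` is divisible if every nonzero scalar maps `D` onto itself. -/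
def IsDivisibleSubmodule (D : Submodule R M) : Prop :=
  ∀ r : R, r ≠ 0 → ∀ d ∈ D, ∃ d' ∈ D, r • d' = d

variable (R M) in
/-- A module is reduced, in the sense of abelian group theory, if its maximal divisible submodule
is zero. -/
def IsReducedModule : Prop :=
  ∀ D : Submodule R M, IsDivisibleSubmodule D → D = ⊥

theorem IsDivisibleSubmodule.map {D : Submodule R M} (hD : IsDivisibleSubmodule D)
    (f : M →ₗ[R] N) : IsDivisibleSubmodule (D.map f) := by
  rintro r hr _ ⟨d, hd, rfl⟩
  obtain ⟨d', hd', rfl⟩ := hD r hr d hd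
  exact ⟨f d', Submodule.mem_map_of_mem hd', (f.map_smul r d').symm⟩

theorem IsReducedModule.of_injective (hN : IsReducedModule R N) {f : M →ₗ[R] N}
    (hf : Injective f) : IsReducedModule R M := fun _ hD ↦
  Submodule.map_injective_of_injective hf ((hN _ (hD.map f)).trans (Submodule.map_bot f).symm)

theorem isReducedModule_of_isHausdorff [IsDomain R] {I : Ideal R} (hI : I ≠ ⊥) [IsHausdorff I M] :
    IsReducedModule R M := by
  obtain ⟨r, hrI, hr⟩ := Submodule.exists_mem_ne_zero_of_ne_bot hI
  refine fun D hD ↦ (Submodule.eq_bot_iff D).mpr fun d hd ↦ IsHausdorff.haus ‹_› d fun n ↦ ?_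
  obtain ⟨d', -, rfl⟩ := hD (r ^ n) (pow_ne_zero n hr) d hd
  exact SModEq.zero.mpr (Submodule.smul_mem_smul (Ideal.pow_mem_pow hrI n) Submodule.mem_top)

end Divisible

section FractionField

variable {R K M Q : Type*} [CommRing R] [Field K] [Algebra R K] [IsFractionRing R K]
  [AddCommGroup M] [Module R M] [AddCommGroup Q] [Module R Q]

variable (R K) in
theorem isDivisibleSubmodule_top_of_isFractionRing :
    IsDivisibleSubmodule (⊤ : Submodule R K) := fun r hr x _ ↦ by
  have hr' : algebraMap R K r ≠ 0 := (map_ne_zero_iff _ (IsFractionRing.injective R K)).mpr hr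
  exact ⟨(algebraMap R K r)⁻¹ * x, Submodule.mem_top, by
    rw [Algebra.smul_def, mul_inv_cancel_left₀ hr']⟩

theorem IsReducedModule.eq_zero_of_isFractionRing (hM : IsReducedModule R M) (s : K →ₗ[R] M) :
    s = 0 := by
  rw [← LinearMap.range_eq_bot, LinearMap.range_eq_map]
  exact hM _ ((isDivisibleSubmodule_top_of_isFractionRing R K).map s)

theorem IsReducedModule.not_exists_section (hM : IsReducedModule R M) (f : M →ₗ[R] K) :
    ¬ ∃ s : K →ₗ[R] M, f ∘ₗ s = LinearMap.id := by
  rintro ⟨s, hs⟩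
  rw [hM.eq_zero_of_isFractionRing s, LinearMap.comp_zero] at hs
  exact zero_ne_one (LinearMap.congr_fun hs (1 : K))

theorem not_finite_of_surjective_of_isFractionRing (hR : ¬ IsField R) {f : M →ₗ[R] K}
    (hf : Surjective f) : ¬ Module.Finite R M := fun _ ↦ by
  have : Module.Finite R K := Module.Finite.of_surjective f hf
  exact hR (isField_of_isIntegral_of_isField (IsFractionRing.injective R K) (Field.toIsField K))

variable (K) in
theorem exists_injective_of_bijective_smul [Nontrivial Q]
    (hQ : ∀ r : R, r ≠ 0 → Bijective fun q : Q ↦ r • q) :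
    ∃ g : K →ₗ[R] Q, Injective g := by
  have := Module.nontrivial R Q
  obtain ⟨q, hq⟩ := exists_ne (0 : Q)
  have isUnit_smul (r : nonZeroDivisors R) : IsUnit (algebraMap R (Module.End R Q) r) :=
    (Module.End.isUnit_iff _).mpr (hQ r (nonZeroDivisors.coe_ne_zero r))
  let g : K →ₗ[R] Q := IsLocalizedModule.lift (nonZeroDivisors R) (Algebra.linearMap R K)
    (LinearMap.toSpanSingleton R Q q) isUnit_smul
  have g_algebraMap (a : R) : g (algebraMap R K a) = a • q :=
    IsLocalizedModule.lift_apply (nonZeroDivisors R) (Algebra.linearMap R K) _ isUnit_smul a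
  refine ⟨g, (injective_iff_map_eq_zero g).mpr fun x hx ↦ ?_⟩
  obtain ⟨a, s, rfl⟩ := IsLocalization.exists_mk'_eq (nonZeroDivisors R) x
  have smul_q_eq_zero : a • q = 0 := by
    rw [← g_algebraMap, ← IsLocalization.smul_mk'_self (m := s), map_smul, hx, smul_zero]
  have ha : a = 0 := by_contra fun ha ↦
    hq ((hQ a ha).injective (smul_q_eq_zero.trans (smul_zero a).symm))
  rw [ha, IsLocalization.mk'_zero]

end FractionField

theorem exists_pullback_submodule_of_exact {R L N Q K : Type*} [CommRing R]
    [AddCommGroup L] [Module R L] [AddCommGroup N] [Module R N] [AddCommGroup Q] [Module R Q]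
    [AddCommGroup K] [Module R K] {i : L →ₗ[R] N} {f : N →ₗ[R] Q} {g : K →ₗ[R] Q}
    (hi : Injective i) (hf : Surjective f) (hif : Exact i f) (hg : Injective g) :
    ∃ (M : Submodule R N) (i' : L →ₗ[R] M) (f' : M →ₗ[R] K),
      Injective i' ∧ Surjective f' ∧ LinearMap.range i' = LinearMap.ker f' := by
  let M : Submodule R N := (LinearMap.range g).comap f
  have i_mem (x : L) : i x ∈ M := by
    simp only [M, Submodule.mem_comap, hif.apply_apply_eq_zero, zero_mem]
  let e : K ≃ₗ[R] LinearMap.range g := LinearEquiv.ofInjective g hg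
  let f' : M →ₗ[R] K := e.symm ∘ₗ f.restrict (p := M) (q := LinearMap.range g) fun _ hx ↦ hx
  have g_f' (m : M) : g (f' m) = f m := congrArg Subtype.val (e.apply_symm_apply _)
  refine ⟨M, i.codRestrict M i_mem, f', fun x y h ↦ hi (congrArg Subtype.val h), fun k ↦ ?_, ?_⟩
  · obtain ⟨n, hn⟩ := hf (g k)
    exact ⟨⟨n, k, hn.symm⟩, hg ((g_f' _).trans hn)⟩
  · ext m
    calc m ∈ LinearMap.range (i.codRestrict M i_mem)
        ↔ (m : N) ∈ Set.range i := by simp [Subtype.ext_iff]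
      _ ↔ g (f' m) = 0 := by rw [← hif, g_f']
      _ ↔ m ∈ LinearMap.ker f' := map_eq_zero_iff g hg

section AdicCompletion

variable {R M : Type*} [CommRing R] [AddCommGroup M] [Module R M] {I : Ideal R} {n : ℕ} {r : R}

theorem exists_smul_eq_of_mem_pow_smul_top (hr : I ^ n ≤ Ideal.span {r}) {x : M}
    (hx : x ∈ (I ^ n • ⊤ : Submodule R M)) : ∃ y : M, r • y = x := by
  have hx' := Submodule.smul_mono_left hr hx
  rw [Submodule.ideal_span_singleton_smul] at hx'
  obtain ⟨y, -, hy⟩ := (Submodule.mem_smul_pointwise_iff_exists _ _ _).mp hx'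
  exact ⟨y, hy⟩

theorem exists_adicCompletion_of_add_smul_eq (hI : I.FG) (hr : I ^ n ≤ Ideal.span {r})
    (x : AdicCompletion I M) : ∃ m y, AdicCompletion.of I M m + r • y = x := by
  obtain ⟨m, hm⟩ := Submodule.mkQ_surjective _ (AdicCompletion.eval I M n x)
  have sub_mem : x - AdicCompletion.of I M m ∈ (I ^ n • ⊤ : Submodule R (AdicCompletion I M)) := by
    rw [AdicCompletion.pow_smul_top_eq_ker_eval hI, LinearMap.mem_ker, map_sub,
      AdicCompletion.eval_of, hm, sub_self]
  obtain ⟨y, hy⟩ := exists_smul_eq_of_mem_pow_smul_top hr sub_mem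
  exact ⟨m, y, by rw [hy, add_sub_cancel]⟩

theorem mem_range_adicCompletion_of_of_smul_mem (hr : I ^ n ≤ Ideal.span {r})
    (hinj : Injective fun x : AdicCompletion I M ↦ r • x) {x : AdicCompletion I M}
    (hx : r • x ∈ LinearMap.range (AdicCompletion.of I M)) :
    x ∈ LinearMap.range (AdicCompletion.of I M) := by
  obtain ⟨b, hb⟩ := hx
  obtain ⟨c, hc⟩ := Submodule.mkQ_surjective _ (AdicCompletion.eval I M n x)
  have sub_mem : b - r • c ∈ (I ^ n • ⊤ : Submodule R M) := by
    rw [← Submodule.ker_mkQ (I ^ n • ⊤ : Submodule R M), LinearMap.mem_ker, map_sub, map_smul, hc,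
      ← AdicCompletion.eval_of, hb, map_smul, sub_self]
  obtain ⟨d, hd⟩ := exists_smul_eq_of_mem_pow_smul_top hr sub_mem
  refine ⟨c + d, hinj ?_⟩
  calc r • AdicCompletion.of I M (c + d)
      = AdicCompletion.of I M b := by rw [← map_smul, smul_add, hd, add_sub_cancel]
    _ = r • x := hb

theorem bijective_smul_adicCompletion_quotient (hI : I.FG) (hr : I ^ n ≤ Ideal.span {r})
    (hinj : Injective fun x : AdicCompletion I M ↦ r • x) :
    Bijective fun q : AdicCompletion I M ⧸ LinearMap.range (AdicCompletion.of I M) ↦ r • q := by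
  constructor
  · refine (injective_iff_map_eq_zero (LinearMap.lsmul R _ r)).mpr fun q hq ↦ ?_
    obtain ⟨x, rfl⟩ := Submodule.mkQ_surjective _ q
    rw [LinearMap.lsmul_apply, ← map_smul, Submodule.mkQ_apply, Submodule.Quotient.mk_eq_zero] at hq
    exact (Submodule.Quotient.mk_eq_zero _).mpr (mem_range_adicCompletion_of_of_smul_mem hr hinj hq)
  · intro q
    obtain ⟨x, rfl⟩ := Submodule.mkQ_surjective _ q
    obtain ⟨m, y, rfl⟩ := exists_adicCompletion_of_add_smul_eq hI hr x
    refine ⟨Submodule.mkQ _ y, ?_⟩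
    have of_eq_zero : Submodule.mkQ _ (AdicCompletion.of I M m) = 0 :=
      (Submodule.Quotient.mk_eq_zero _).mpr (LinearMap.mem_range_self _ m)
    rw [map_add, of_eq_zero, zero_add, map_smul]

theorem nontrivial_adicCompletion_quotient (h : ¬ IsPrecomplete I M) :
    Nontrivial (AdicCompletion I M ⧸ LinearMap.range (AdicCompletion.of I M)) := by
  rwa [Submodule.Quotient.nontrivial_iff, Ne, LinearMap.range_eq_top,
    AdicCompletion.of_surjective_iff]

end AdicCompletion

section OneDimensional

variable {R : Type*} [CommRing R] [IsLocalRing R]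

theorem exists_maximalIdeal_pow_le_span_singleton_s10 [IsNoetherianRing R] [Ring.DimensionLEOne R]
    {r : R} (hr : r ≠ 0) : ∃ n, maximalIdeal R ^ n ≤ Ideal.span {r} := by
  refine Ideal.exists_pow_le_of_le_radical_of_fg ?_ (maximalIdeal R).fg_of_isNoetherianRing
  rw [Ideal.radical_eq_sInf]
  refine le_sInf fun P ⟨hrP, hP⟩ ↦ ?_
  have hP0 : P ≠ ⊥ := fun h ↦ hr (by simpa [h] using hrP)
  exact (eq_maximalIdeal (hP.isMaximal hP0)).ge

theorem not_isField_of_not_isAdicComplete (h : ¬ IsAdicComplete (maximalIdeal R) R) :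
    ¬ IsField R := fun hR ↦ by
  rw [isField_iff_maximalIdeal_eq.mp hR] at h
  exact h inferInstance

end OneDimensional

theorem zploc_nonsplit_extension_general {R : Type u} [CommRing R] [IsDomain R] [IsLocalRing R]
    [IsNoetherianRing R] [Ring.DimensionLEOne R] (hR : ¬ IsAdicComplete (maximalIdeal R) R)
    (K : Type*) [Field K] [Algebra R K] [IsFractionRing R K] :
    ∃ (M : ModuleCat.{u} R) (i : R →ₗ[R] M) (f : M →ₗ[R] K),
      Injective i ∧ Surjective f ∧ LinearMap.range i = LinearMap.ker f ∧
      (¬ ∃ s : K →ₗ[R] M, f ∘ₗ s = LinearMap.id) ∧ ¬ Module.Finite R M ∧ IsReducedModule R M := by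
  have not_field : ¬ IsField R := not_isField_of_not_isAdicComplete hR
  have nontrivial_quotient := nontrivial_adicCompletion_quotient fun h ↦ hR { prec' := h.prec' }
  obtain ⟨g, hg⟩ := exists_injective_of_bijective_smul K fun r hr ↦
    have ⟨_, hn⟩ := exists_maximalIdeal_pow_le_span_singleton_s10 hr
    bijective_smul_adicCompletion_quotient (maximalIdeal R).fg_of_isNoetherianRing hn
      (smul_right_injective (AdicCompletion (maximalIdeal R) R) hr)
  obtain ⟨M, i, f, hi, hf, hif⟩ := exists_pullback_submodule_of_exact
    (AdicCompletion.of_injective (maximalIdeal R) R) (Submodule.mkQ_surjective _)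
    (LinearMap.exact_map_mkQ_range _) hg
  have completion_reduced : IsReducedModule R (AdicCompletion (maximalIdeal R) R) :=
    isReducedModule_of_isHausdorff (isField_iff_maximalIdeal_eq.not.mp not_field)
  have hM : IsReducedModule R M := completion_reduced.of_injective M.subtype_injective
  exact ⟨ModuleCat.of R M, i, f, hi, hf, hif, hM.not_exists_section f,
    not_finite_of_surjective_of_isFractionRing not_field hf, hM⟩

section Henselian

variable {R : Type*} [CommRing R] {I : Ideal R}

open Polynomial in
theorem exists_sq_add_eq_self_of_mem [HenselianRing R I] {c : R} (hc : c ∈ I) :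
    ∃ x : R, x ^ 2 + c = x := by
  have hmonic : (X ^ 2 - X + C c : R[X]).Monic := by monicity!
  obtain ⟨x, hx, -⟩ := HenselianRing.is_henselian (I := I) _ hmonic 0
    (by simpa using hc) (by simp)
  have root_eq : x ^ 2 - x + c = 0 := by simpa using hx
  exact ⟨x, by linear_combination root_eq⟩

theorem not_henselianRing_of_natCast_mem (F : Type*) [CommRing F] [LinearOrder F]
    [IsStrictOrderedRing F] [Algebra R F] {n : ℕ} (hn : n ≠ 0) (hnI : (n : R) ∈ I) :
    ¬ HenselianRing R I := fun _ ↦ by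
  obtain ⟨x, hx⟩ := exists_sq_add_eq_self_of_mem hnI
  have hxF : algebraMap R F x ^ 2 + n = algebraMap R F x := by
    simpa using congrArg (algebraMap R F) hx
  have one_le_n : (1 : F) ≤ n := mod_cast Nat.one_le_iff_ne_zero.mpr hn
  nlinarith [sq_nonneg (2 * algebraMap R F x - 1)]

end Henselian

theorem zpLoc_dimensionLEOne (p : ℕ) [Fact p.Prime] : Ring.DimensionLEOne (ZpLoc p) :=
  Ring.DimensionLEOne.localization (ZpLoc p)
    (Ideal.span ({(p : ℤ)} : Set ℤ)).primeCompl_le_nonZeroDivisors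

theorem natCast_mem_maximalIdeal_zpLoc (p : ℕ) [Fact p.Prime] :
    (p : ZpLoc p) ∈ maximalIdeal (ZpLoc p) := by
  have := (IsLocalization.AtPrime.to_map_mem_maximal_iff (ZpLoc p)
    (Ideal.span ({(p : ℤ)} : Set ℤ)) p).mpr (Ideal.mem_span_singleton_self _)
  simpa using this

theorem not_isAdicComplete_zpLoc (p : ℕ) [hp : Fact p.Prime] [Algebra (ZpLoc p) ℚ] :
    ¬ IsAdicComplete (maximalIdeal (ZpLoc p)) (ZpLoc p) := fun _ ↦
  not_henselianRing_of_natCast_mem ℚ hp.out.ne_zero (natCast_mem_maximalIdeal_zpLoc p) inferInstance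

/-- Over the (non-complete) discrete valuation ring `ℤ_(p)`, there is a
`ℤ_(p)`-module `M` and a non-split short exact sequence
`0 → ℤ_(p) → M → ℚ → 0`; moreover `M` is not finitely generated and its
maximal divisible submodule is zero. Here `ℚ` carries its `ℤ_(p)`-module
structure as the fraction field of `ℤ_(p)`. -/
theorem zploc_nonsplit_extension (p : ℕ) [Fact p.Prime]
    [Algebra (ZpLoc p) ℚ] [IsFractionRing (ZpLoc p) ℚ] :
    ∃ (M : ModuleCat.{0} (ZpLoc p)) (i : ZpLoc p →ₗ[ZpLoc p] M)
      (f : M →ₗ[ZpLoc p] ℚ),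
      Function.Injective i ∧
      Function.Surjective f ∧
      LinearMap.range i = LinearMap.ker f ∧
      (¬ ∃ s : ℚ →ₗ[ZpLoc p] M, f ∘ₗ s = LinearMap.id) ∧
      (¬ Module.Finite (ZpLoc p) M) ∧
      (∀ D : Submodule (ZpLoc p) M,
        (∀ r : ZpLoc p, r ≠ 0 → ∀ d ∈ D, ∃ d' ∈ D, r • d' = d) → D = ⊥) := by
  have := zpLoc_dimensionLEOne p
  exact zploc_nonsplit_extension_general (not_isAdicComplete_zpLoc p) ℚ
end
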